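/- Let P be a probability distribution on {0,1}^n with marginals P_B = M_{N∖B} P for B ⊆ N = {1,…,n} (with P_∅ ≡ the constant function 1), and let c_N = 2^{−n} Σ_y P(y) σ_N(y). Then for all x ∈ {0,1}^n, Σ_{B ⊊ N} (−1)^{n−|B|−1} 2^{|B|−n} P_B(x) = P(x) − c_N σ_N(x). -/

import Mathlib

/-- Flip the coordinates of `x ∈ {0,1}ⁿ` indexed by `A`. -/
def flipOn {n : ℕ} (A : Finset (Fin n)) (x : Fin n → Bool) : Fin n → Bool :=
  fun i => if i ∈ A then !(x i) else x i

/-- The bit-flip operator `κ_A`, the composite of the `κ_i` over `i ∈ A`: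
`(κ_A f)(x) = f(x with coordinates in A flipped)`. -/
def kop {n : ℕ} (A : Finset (Fin n)) (f : (Fin n → Bool) → ℝ) : (Fin n → Bool) → ℝ :=
  fun x => f (flipOn A x)

/-- The operator `M_A`, the composite of the commuting operators
`(M_i f)(x) = f(x) + f(x with i-th coordinate flipped)` over `i ∈ A`;
equivalently `(M_A f)(x) = Σ_{B ⊆ A} f(x with coordinates in B flipped)`. -/
def Mop {n : ℕ} (A : Finset (Fin n)) (f : (Fin n → Bool) → ℝ) : (Fin n → Bool) → ℝ :=
  fun x => ∑ B ∈ A.powerset, f (flipOn B x)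

/-- A probability distribution on the subset `A ⊆ N` of the binary variables:
a nonnegative function on `{0,1}ⁿ`, constant in the coordinates outside `A`,
with `M_A P_A` the constant function 1. -/
def IsDistOn {n : ℕ} (A : Finset (Fin n)) (f : (Fin n → Bool) → ℝ) : Prop :=
  (∀ x, 0 ≤ f x) ∧ (∀ i, i ∉ A → kop {i} f = f) ∧ Mop A f = fun _ => (1 : ℝ)

/-- A family `(P_A)_{A ⊊ N}` of distributions on the proper subsets of `N` is
equimarginal if `M_{B∖A} P_B = M_{C∖A} P_C` whenever `A ⊆ B ∩ C` with `B, C ⊊ N`. -/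
def Equimarginal {n : ℕ} (P : Finset (Fin n) → (Fin n → Bool) → ℝ) : Prop :=
  ∀ A B C : Finset (Fin n), B ⊂ Finset.univ → C ⊂ Finset.univ → A ⊆ B → A ⊆ C →
    Mop (B \ A) (P B) = Mop (C \ A) (P C)

/-- The sign function `σ_A(x) = Π_{i∈A} (-1)^{x_i}`. -/
def sigmaFn {n : ℕ} (A : Finset (Fin n)) (x : Fin n → Bool) : ℝ :=
  ∏ i ∈ A, (if x i then (-1 : ℝ) else 1)

/-!
Writing `κ_i` for the flip of the `i`-th coordinate, `M_i = 1 + κ_i`, so that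
`∏ i ∈ A, (2 - M_i) = ∏ i ∈ A, (1 - κ_i)`. Expanding both products gives
`∑ B ⊆ A, 2^|B| (-1)^|A \ B| M_{A \ B} = ∑ C ⊆ A, (-1)^|C| κ_C`. For `A = N` the right-hand side
sends `f` to `(∑ y, f y σ_N(y)) σ_N`, because the flips `κ_C` reach each point exactly once and
`σ_N` picks up the sign `(-1)^|C|`. The term `B = N` on the left is `2^n f`.
-/

section Flip

variable {n : ℕ} (C : Finset (Fin n)) (f : (Fin n → Bool) → ℝ) (x : Fin n → Bool)

lemma flipOn_empty : flipOn ∅ x = x := by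
  funext i
  simp [flipOn]

lemma flipOn_apply_ne_iff (i : Fin n) : flipOn C x i ≠ x i ↔ i ∈ C := by
  simp [flipOn]

lemma flipOn_bijective : Function.Bijective fun C => flipOn C x := by
  refine (Fintype.bijective_iff_injective_and_card _).2 ⟨fun C D hCD => ?_, by simp⟩
  replace hCD : flipOn C x = flipOn D x := hCD
  ext i
  rw [← flipOn_apply_ne_iff C x, ← flipOn_apply_ne_iff D x, congrFun hCD i]

lemma sum_kop_eq_sum : ∑ C, kop C f x = ∑ y, f y :=
  (flipOn_bijective x).sum_comp f

lemma Mop_empty : Mop ∅ f = f := by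
  funext x
  simp [Mop, flipOn_empty]

end Flip

section Sign

variable {n : ℕ} (A C : Finset (Fin n)) (f : (Fin n → Bool) → ℝ) (x : Fin n → Bool)

lemma sigmaFn_mul_self : sigmaFn A x * sigmaFn A x = 1 := by
  rw [sigmaFn, ← Finset.prod_mul_distrib]
  refine Finset.prod_eq_one fun i _ => ?_
  split_ifs <;> norm_num

lemma sigmaFn_flipOn : sigmaFn A (flipOn C x) = (-1) ^ (A ∩ C).card * sigmaFn A x := by
  rw [← Finset.prod_const, ← Finset.prod_ite_mem, sigmaFn, sigmaFn, ← Finset.prod_mul_distrib]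
  refine Finset.prod_congr rfl fun i _ => ?_
  by_cases hi : i ∈ C <;> cases hx : x i <;> simp [flipOn, hi, hx]

lemma sum_neg_one_pow_mul_kop :
    ∑ C, (-1) ^ C.card * kop C f x
      = (∑ y, f y * sigmaFn Finset.univ y) * sigmaFn Finset.univ x := by
  rw [← sum_kop_eq_sum _ x, Finset.sum_mul]
  refine Finset.sum_congr rfl fun C _ => ?_
  rw [kop, kop, sigmaFn_flipOn, Finset.univ_inter]
  linear_combination (-(-1) ^ C.card * f (flipOn C x)) * sigmaFn_mul_self Finset.univ x

end Sign

section Expansion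

lemma sum_powerset_sdiff_pow_mul_pow {ι R : Type*} [DecidableEq ι] [CommSemiring R]
    {A C : Finset ι} (hC : C ⊆ A) (a b : R) :
    ∑ B ∈ (A \ C).powerset, a ^ B.card * b ^ (A \ B).card
      = b ^ C.card * (a + b) ^ (A \ C).card := by
  rw [← Finset.sum_pow_mul_eq_add_pow, Finset.mul_sum]
  refine Finset.sum_congr rfl fun B hB => ?_
  have hBA : B ⊆ A \ C := Finset.mem_powerset.1 hB
  have hcard : (A \ B).card = C.card + ((A \ C).card - B.card) := by
    have := Finset.card_le_card hBA
    have := Finset.card_sdiff_add_card_eq_card hC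
    have := Finset.card_sdiff_add_card_eq_card (hBA.trans Finset.sdiff_subset)
    omega
  rw [hcard, pow_add]
  ring

lemma neg_one_pow_card_sub_card_sub_one {ι R : Type*} [DecidableEq ι] [Ring R]
    {A B : Finset ι} (hB : B ⊂ A) :
    (-1 : R) ^ (A.card - B.card - 1) = -(-1) ^ (A \ B).card := by
  have hcard : (A \ B).card = A.card - B.card - 1 + 1 := by
    have := Finset.card_lt_card hB
    rw [Finset.card_sdiff_of_subset hB.subset]
    omega
  rw [hcard, pow_succ, mul_neg_one, neg_neg]

variable {n : ℕ} (A : Finset (Fin n)) (f : (Fin n → Bool) → ℝ) (x : Fin n → Bool)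

-- This is `∏ i ∈ A, (a + b M_i) = ∏ i ∈ A, ((a + b) + b κ_i)`, with both products expanded.
lemma sum_powerset_pow_mul_pow_mul_Mop_sdiff (a b : ℝ) :
    ∑ B ∈ A.powerset, a ^ B.card * b ^ (A \ B).card * Mop (A \ B) f x
      = ∑ C ∈ A.powerset, b ^ C.card * (a + b) ^ (A \ C).card * kop C f x := by
  have disjoint_pair_comm : ∀ B C : Finset (Fin n),
      B ∈ A.powerset ∧ C ∈ (A \ B).powerset ↔ B ∈ (A \ C).powerset ∧ C ∈ A.powerset := by
    intro B C
    simp only [Finset.mem_powerset, Finset.subset_sdiff, disjoint_comm]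
    tauto
  simp only [Mop, Finset.mul_sum]
  rw [Finset.sum_comm' disjoint_pair_comm]
  refine Finset.sum_congr rfl fun C hC => ?_
  rw [← Finset.sum_mul, sum_powerset_sdiff_pow_mul_pow (Finset.mem_powerset.1 hC), kop]

lemma sum_ssubsets_Mop_sdiff :
    ∑ B ∈ A.ssubsets, (-1) ^ (A.card - B.card - 1) * (2 ^ B.card / 2 ^ A.card) * Mop (A \ B) f x
      = f x - (∑ C ∈ A.powerset, (-1) ^ C.card * kop C f x) / 2 ^ A.card := by
  have expansion : ∑ B ∈ A.ssubsets, 2 ^ B.card * (-1) ^ (A \ B).card * Mop (A \ B) f x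
      + 2 ^ A.card * f x = ∑ C ∈ A.powerset, (-1) ^ C.card * kop C f x := by
    have full := sum_powerset_pow_mul_pow_mul_Mop_sdiff A f x 2 (-1)
    rw [← Finset.sum_erase_add _ _ (Finset.mem_powerset_self A), ← Finset.ssubsets,
      Finset.sdiff_self, Mop_empty] at full
    norm_num only [Finset.card_empty, pow_zero, one_pow, mul_one] at full
    exact full
  calc
    _ = ∑ B ∈ A.ssubsets,
          -(2 ^ B.card * (-1) ^ (A \ B).card * Mop (A \ B) f x) / 2 ^ A.card := by
      refine Finset.sum_congr rfl fun B hB => ?_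
      rw [neg_one_pow_card_sub_card_sub_one (Finset.mem_ssubsets.1 hB)]
      ring
    _ = -(∑ B ∈ A.ssubsets, 2 ^ B.card * (-1) ^ (A \ B).card * Mop (A \ B) f x) / 2 ^ A.card := by
      rw [← Finset.sum_div, Finset.sum_neg_distrib]
    _ = _ := by
      rw [← expansion]
      field_simp
      ring

end Expansion

theorem stmt_7_general (n : ℕ) (P : (Fin n → Bool) → ℝ) (x : Fin n → Bool) :
    (∑ B ∈ Finset.univ.filter (fun B : Finset (Fin n) => B ⊂ Finset.univ),
        (-1 : ℝ) ^ (n - B.card - 1) * (2 ^ B.card / 2 ^ n) * Mop (Finset.univ \ B) P x)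
      = P x - ((∑ y : Fin n → Bool, P y * sigmaFn Finset.univ y) / 2 ^ n)
            * sigmaFn Finset.univ x := by
  have proper_eq_ssubsets : Finset.univ.filter (fun B : Finset (Fin n) => B ⊂ Finset.univ)
      = Finset.univ.ssubsets := by
    ext B
    simp only [Finset.mem_filter_univ, Finset.mem_ssubsets]
  have expansion := sum_ssubsets_Mop_sdiff Finset.univ P x
  rw [Finset.card_fin, Finset.powerset_univ, sum_neg_one_pow_mul_kop] at expansion
  rw [proper_eq_ssubsets, expansion, div_mul_eq_mul_div]

/-- equation (18) of the paper.  For a probability distribution `P` on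
`{0,1}ⁿ` with marginals `P_B = M_{N∖B} P` (and `P_∅ ≡ 1 = M_N P`), and
`c_N = 2⁻ⁿ Σ_y P(y) σ_N(y)`, one has
`Σ_{B ⊊ N} (-1)^{n-|B|-1} 2^{|B|-n} P_B(x) = P(x) - c_N σ_N(x)`. -/
theorem stmt_7 (n : ℕ) (P : (Fin n → Bool) → ℝ)
    (hnn : ∀ x, 0 ≤ P x) (hsum : ∑ x : Fin n → Bool, P x = 1) (x : Fin n → Bool) :
    (∑ B ∈ Finset.univ.filter (fun B : Finset (Fin n) => B ⊂ Finset.univ),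
        (-1 : ℝ) ^ (n - B.card - 1) * (2 ^ B.card / 2 ^ n) * Mop (Finset.univ \ B) P x)
      = P x - ((∑ y : Fin n → Bool, P y * sigmaFn Finset.univ y) / 2 ^ n)
            * sigmaFn Finset.univ x :=
  stmt_7_general n P x
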